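/- Let K ≥ 2, τ > 0, and β ∈ ℝ^K with all β_i > 0. Define h(x) = (∑_{j=1}^K β_j/x_j^τ)^{−K} ∏_{i=1}^K x_i^{−(τ+1)}, k(x) = ∑_{j=1}^K β_j/x_j^τ, and J_0 = 1/((K−1)! τ^{K−1} ∏_{i=1}^K β_i). Then: ∫_{S_K} h(x) [ (∑_{l=1}^K (β_l/x_l^τ)(log x_l)²)/k(x) − (∑_{l=1}^K (β_l/x_l^τ) log x_l)²/k(x)² ] d^{K−1}x = J_0 [ K(K−1)(π²/6 − 1) + (1/2) ∑_{i=1}^K ∑_{k=1}^K (log β_i − log β_k)² ] / (K(K+1) τ²). (The integrand equals −(1/K) h(x) ∂² log h(x)/∂τ², so this computes the τ–τ component of the Fisher information of the Concrete distribution.) -/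

import Mathlib

open MeasureTheory Finset

noncomputable def fillMap (K : ℕ) (u : Fin (K - 1) → ℝ) : Fin K → ℝ :=
  fun i => if h : (i : ℕ) < K - 1 then u ⟨i, h⟩ else 1 - ∑ j, u j

/-- The `(K-1)`-dimensional Lebesgue measure on the probability simplex `S_K`. -/
noncomputable def simplexMeasure (K : ℕ) : Measure (Fin K → ℝ) :=
  Measure.map (fillMap K)
    (volume.restrict {u : Fin (K - 1) → ℝ | (∀ j, 0 ≤ u j) ∧ ∑ j, u j ≤ 1})

/-- The unnormalized Concrete density `h(x) = (∑_j β_j/x_j^τ)^{-K} ∏_i x_i^{-(τ+1)}`. -/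
noncomputable def hfun (K : ℕ) (β : Fin K → ℝ) (τ : ℝ) (x : Fin K → ℝ) : ℝ :=
  (∑ j, β j / x j ^ τ) ^ (-(K : ℝ)) * ∏ i, x i ^ (-(τ + 1))

/-- `k(x) = ∑_j β_j/x_j^τ`. -/
noncomputable def kfun (K : ℕ) (β : Fin K → ℝ) (τ : ℝ) (x : Fin K → ℝ) : ℝ :=
  ∑ j, β j / x j ^ τ

/-- `J_0 = 1/((K−1)! τ^{K−1} ∏_i β_i)`. -/
noncomputable def J0 (K : ℕ) (β : Fin K → ℝ) (τ : ℝ) : ℝ :=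
  1 / ((Nat.factorial (K - 1) : ℝ) * τ ^ (K - 1) * ∏ i, β i)


noncomputable def gM1 (z : ℂ) : ℂ := mellin (fun t : ℝ => Real.log t • ((Real.exp (-t) : ℝ) : ℂ)) z
noncomputable def gM2 (z : ℂ) : ℂ :=
  mellin (fun t : ℝ => Real.log t • (Real.log t • ((Real.exp (-t) : ℝ) : ℂ))) z

lemma g_exp_top (a : ℝ) : (fun t : ℝ => ((Real.exp (-t) : ℝ) : ℂ)) =O[Filter.atTop] (· ^ (-a)) := by
  rw [← Asymptotics.isBigO_norm_left]
  simp_rw [Complex.norm_real, Asymptotics.isBigO_norm_left]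
  simpa only [neg_one_mul] using (isLittleO_exp_neg_mul_rpow_atTop zero_lt_one _).isBigO

lemma g_exp_bot : (fun t : ℝ => ((Real.exp (-t) : ℝ) : ℂ)) =O[nhdsWithin 0 (Set.Ioi 0)]
    (· ^ (-(0:ℝ))) := by
  simp_rw [neg_zero, Real.rpow_zero]
  have : Continuous (fun t : ℝ => ((Real.exp (-t) : ℝ) : ℂ)) := by fun_prop
  exact (this.continuousWithinAt.tendsto).isBigO_one ℝ

lemma g_d1 (s : ℂ) (hs : 0 < s.re) :
    MellinConvergent (fun t : ℝ => Real.log t • ((Real.exp (-t) : ℝ) : ℂ)) s ∧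
    HasDerivAt Complex.Gamma (gM1 s) s := by
  have h := mellin_hasDerivAt_of_isBigO_rpow (E := ℂ) (s := s) (a := s.re + 1) (b := 0)
    (f := fun t : ℝ => ((Real.exp (-t) : ℝ) : ℂ)) ?_ (g_exp_top _) (by linarith) g_exp_bot hs
  · refine ⟨h.1, h.2.congr_of_eventuallyEq ?_⟩
    have : ∀ᶠ z : ℂ in nhds s, 0 < z.re :=
      (Complex.continuous_re.isOpen_preimage _ isOpen_Ioi).mem_nhds hs
    filter_upwards [this] with z hz
    rw [Complex.Gamma_eq_integral hz, Complex.GammaIntegral_eq_mellin]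
  · refine (Continuous.continuousOn ?_).locallyIntegrableOn measurableSet_Ioi
    fun_prop

lemma g_d2 (s : ℂ) (hs : 0 < s.re) :
    MellinConvergent (fun t : ℝ => Real.log t • (Real.log t • ((Real.exp (-t) : ℝ) : ℂ))) s ∧
    HasDerivAt gM1 (gM2 s) s := by
  refine mellin_hasDerivAt_of_isBigO_rpow (E := ℂ) (s := s) (a := s.re + 1) (b := s.re/2)
    (f := fun t : ℝ => Real.log t • ((Real.exp (-t) : ℝ) : ℂ)) ?_
    (isBigO_rpow_top_log_smul (a := s.re + 2) (by linarith) (g_exp_top _)) (by linarith)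
    (isBigO_rpow_zero_log_smul (a := 0) (by linarith) g_exp_bot) (by linarith)
  refine ContinuousOn.locallyIntegrableOn (ContinuousOn.fun_smul ?_ (Continuous.continuousOn ?_))
    measurableSet_Ioi
  · exact Real.continuousOn_log.mono (fun x hx => ne_of_gt hx)
  · fun_prop

lemma g_refl (z : ℂ) : Complex.Gamma (2 + z) * Complex.Gamma (2 - z) * Complex.sin (Real.pi * z)
    = (1 - z ^ 2) * (Real.pi * z) ∨ ¬ (‖z‖ < 1) := by
  by_cases hz : ‖z‖ < 1
  swap
  · exact Or.inr hz
  left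
  by_cases h0 : z = 0
  · simp [h0]
  have h1 : z ≠ 1 := by rintro rfl; simp at hz
  have h2 : 1 + z ≠ 0 := by
    intro h
    have : z = -1 := by linear_combination h
    rw [this] at hz; simp at hz
  have e1 : Complex.Gamma (2 + z) = (1 + z) * (z * Complex.Gamma z) := by
    rw [← Complex.Gamma_add_one z h0, show 2 + z = (1 + z) + 1 by ring, Complex.Gamma_add_one _ h2,
      add_comm 1 z]
  have e2 : Complex.Gamma (2 - z) = (1 - z) * Complex.Gamma (1 - z) := by
    rw [show 2 - z = (1 - z) + 1 by ring, Complex.Gamma_add_one _ (sub_ne_zero.2 h1.symm)]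
  have e3 := Complex.Gamma_mul_Gamma_one_sub z
  have hs : Complex.sin (Real.pi * z) ≠ 0 := by
    intro h
    rw [Complex.sin_eq_zero_iff] at h
    obtain ⟨k, hk⟩ := h
    have hpi : (Real.pi : ℂ) ≠ 0 := by exact_mod_cast Real.pi_ne_zero
    have hzk : z = k := by
      apply mul_left_cancel₀ hpi; rw [hk]; ring
    rw [hzk] at hz h0
    have : ‖(k:ℂ)‖ = |(k:ℝ)| := by simp
    rw [this] at hz
    have : |k| < 1 := by exact_mod_cast hz
    exact h0 (by exact_mod_cast Int.abs_lt_one_iff.1 this)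
  rw [e1, e2]
  rw [eq_div_iff hs] at e3
  linear_combination (1 + z) * (1 - z) * z * e3

lemma g_second : 2 * gM2 2 - 2 * gM1 2 ^ 2 = (Real.pi : ℂ) ^ 2 / 3 - 2 := by
  have hpi : (Real.pi : ℂ) ≠ 0 := by exact_mod_cast Real.pi_ne_zero
  set P : ℂ → ℂ := fun z => Complex.Gamma (2 + z) * Complex.Gamma (2 - z) with hP
  set S : ℂ → ℂ := fun z => Complex.sin (Real.pi * z) with hS
  set R : ℂ → ℂ := fun z => (1 - z ^ 2) * (Real.pi * z) with hR
  have hU : ∀ᶠ z : ℂ in nhds 0, ‖z‖ < 1 := by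
    have := Metric.ball_mem_nhds (0:ℂ) one_pos
    filter_upwards [this] with z hz
    simpa using hz
  have hre : ∀ z : ℂ, ‖z‖ < 1 → 0 < (2 + z).re ∧ 0 < (2 - z).re := by
    intro z hz
    have := Complex.abs_re_le_norm z
    have := abs_lt.1 (this.trans_lt hz)
    constructor <;> simp <;> linarith
  have hPS : P * S =ᶠ[nhds 0] R := by
    filter_upwards [hU] with z hz
    rcases g_refl z with h | h
    · exact h
    · exact absurd hz h
  have hdP : ∀ z : ℂ, ‖z‖ < 1 → HasDerivAt P
      (gM1 (2 + z) * Complex.Gamma (2 - z) - Complex.Gamma (2 + z) * gM1 (2 - z)) z := by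
    intro z hz
    have h1 := ((g_d1 _ (hre z hz).1).2).comp_const_add 2 z
    have h2 := ((g_d1 _ (hre z hz).2).2).comp_const_sub 2 z
    refine (h1.mul h2).congr_deriv ?_
    ring
  have hdP2 : HasDerivAt (fun z => gM1 (2 + z) * Complex.Gamma (2 - z) - Complex.Gamma (2 + z) * gM1 (2 - z))
      (2 * gM2 2 - 2 * gM1 2 ^ 2) 0 := by
    have t1 : (0:ℝ) < ((2:ℂ) + 0).re := by simp
    have t2 : (0:ℝ) < ((2:ℂ) - 0).re := by simp
    have h1 := ((g_d1 _ t1).2).comp_const_add 2 0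
    have h2 := ((g_d1 _ t2).2).comp_const_sub 2 0
    have h3 := ((g_d2 _ t1).2).comp_const_add 2 0
    have h4 := ((g_d2 _ t2).2).comp_const_sub 2 0
    refine ((h3.mul h2).sub (h1.mul h4)).congr_deriv ?_
    have hG : Complex.Gamma 2 = 1 := by
      simpa using Complex.Gamma_nat_eq_factorial 1
    simp only [add_zero, sub_zero, hG]
    ring
  have hPc : ContDiffAt ℂ ((3:ℕ)) P 0 := by
    have : AnalyticAt ℂ P 0 := by
      rw [Complex.analyticAt_iff_eventually_differentiableAt]
      filter_upwards [hU] with z hz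
      exact (hdP z hz).differentiableAt
    exact this.contDiffAt
  have hSc : ContDiffAt ℂ ((3:ℕ)) S 0 := by
    have : ContDiff ℂ (3:ℕ) S := by fun_prop
    exact this.contDiffAt
  have key := iteratedDeriv_mul hPc hSc
  rw [hPS.iteratedDeriv_eq] at key
  have dS1 : deriv S = fun z => Real.pi * Complex.cos (Real.pi * z) := by
    funext z
    have := (Complex.hasDerivAt_sin (Real.pi * z)).comp z ((hasDerivAt_id z).const_mul (Real.pi:ℂ))
    have := this.deriv
    simp only [Function.comp_def, id] at this
    rw [hS, this]; ring
  have dS2 : deriv (deriv S) = fun z => - (Real.pi^2 * Complex.sin (Real.pi * z)) := by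
    rw [dS1]
    funext z
    have := ((Complex.hasDerivAt_cos (Real.pi * z)).comp z ((hasDerivAt_id z).const_mul (Real.pi:ℂ))).const_mul (Real.pi : ℂ)
    have := this.deriv
    simp only [Function.comp_def, id] at this
    rw [this]; ring
  have dS3 : deriv (deriv (deriv S)) 0 = - Real.pi^3 := by
    rw [dS2]
    have := (((Complex.hasDerivAt_sin (Real.pi * 0)).comp 0 ((hasDerivAt_id 0).const_mul (Real.pi:ℂ))).const_mul (Real.pi^2 : ℂ)).neg
    have := this.deriv
    simp only [Function.comp_def, id, Pi.neg_def] at this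
    rw [this]; simp; ring
  have dR1 : deriv R = fun z : ℂ => (Real.pi : ℂ) * (1 - 3 * z ^ 2) := by
    funext z
    have : HasDerivAt R ((0 - 2 * z ^ 1 * 1) * (Real.pi * z) + (1 - z ^ 2) * (Real.pi * 1)) z := by
      refine HasDerivAt.mul ?_ ((hasDerivAt_id z).const_mul _)
      exact (hasDerivAt_const z 1).sub ((hasDerivAt_id z).pow 2)
    rw [this.deriv]; ring
  have dR2 : deriv (deriv R) = fun z : ℂ => -6 * (Real.pi:ℂ) * z := by
    rw [dR1]
    funext z
    have : HasDerivAt (fun z : ℂ => Real.pi * (1 - 3 * z ^ 2)) (Real.pi * (0 - 3 * (2 * z ^ 1 * 1))) z := by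
      refine HasDerivAt.const_mul _ ?_
      exact (hasDerivAt_const z 1).sub (((hasDerivAt_id z).pow 2).const_mul 3)
    rw [this.deriv]; ring
  have dR3 : deriv (deriv (deriv R)) 0 = -6 * Real.pi := by
    rw [dR2]
    have := ((hasDerivAt_id (0:ℂ)).const_mul (-6 * Real.pi : ℂ)).deriv
    simp only [id] at this
    rw [this]; ring
  have dP2 : deriv (deriv P) 0 = 2 * gM2 2 - 2 * gM1 2 ^ 2 := by
    have : deriv P =ᶠ[nhds 0] (fun z => gM1 (2 + z) * Complex.Gamma (2 - z) - Complex.Gamma (2 + z) * gM1 (2 - z)) := by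
      filter_upwards [hU] with z hz
      exact (hdP z hz).deriv
    rw [this.deriv_eq, hdP2.deriv]
  have hP0 : P 0 = 1 := by
    have hG : Complex.Gamma 2 = 1 := by
      simpa using Complex.Gamma_nat_eq_factorial 1
    simp [hP, hG]
  have i2 : ∀ f : ℂ → ℂ, iteratedDeriv 2 f = deriv (deriv f) := by
    intro f; rw [iteratedDeriv_succ, iteratedDeriv_one]
  have i3 : ∀ f : ℂ → ℂ, iteratedDeriv 3 f = deriv (deriv (deriv f)) := by
    intro f; rw [iteratedDeriv_succ, i2]
  simp only [Finset.sum_range_succ, Finset.sum_range_zero, i3, i2, iteratedDeriv_one, iteratedDeriv_zero,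
    Nat.sub_self, Nat.sub_zero, show 3 - 1 = 2 from rfl, show 3 - 2 = 1 from rfl, dR3, dS3, dP2, hP0] at key
  rw [dS2, dS1] at key
  simp [hS, Nat.choose] at key
  have : (2 * gM2 2 - 2 * gM1 2 ^ 2) * Real.pi * 3 = (Real.pi:ℂ)^3 - 6 * Real.pi := by
    linear_combination -key
  have h3 : (3 * (Real.pi:ℂ)) ≠ 0 := by simp [hpi]
  apply mul_left_cancel₀ h3
  linear_combination this

noncomputable def c1 : ℝ := ∫ t in Set.Ioi (0:ℝ), t * Real.exp (-t) * Real.log t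
noncomputable def c2 : ℝ := ∫ t in Set.Ioi (0:ℝ), t * Real.exp (-t) * Real.log t ^ 2

lemma c_int1 : IntegrableOn (fun t => t * Real.exp (-t) * Real.log t) (Set.Ioi (0:ℝ)) := by
  have h := (g_d1 2 (by simp)).1
  have h := h.re
  refine h.congr (ae_of_all _ fun t => ?_)
  simp only [show (2:ℂ) - 1 = 1 by norm_num, Complex.cpow_one, smul_eq_mul, Complex.real_smul, RCLike.re_eq_complex_re]
  norm_cast
  ring

lemma c_int2 : IntegrableOn (fun t => t * Real.exp (-t) * Real.log t ^ 2) (Set.Ioi (0:ℝ)) := by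
  have h := (g_d2 2 (by simp)).1
  have h := h.re
  refine h.congr (ae_of_all _ fun t => ?_)
  simp only [show (2:ℂ) - 1 = 1 by norm_num, Complex.cpow_one, smul_eq_mul, Complex.real_smul, RCLike.re_eq_complex_re]
  norm_cast
  ring

lemma gM1_eq : gM1 2 = (c1 : ℂ) := by
  rw [gM1, mellin, c1, ← integral_complex_ofReal]
  congr 1
  funext t
  simp only [show (2:ℂ) - 1 = 1 by norm_num, Complex.cpow_one, smul_eq_mul, Complex.real_smul]
  push_cast
  ring

lemma gM2_eq : gM2 2 = (c2 : ℂ) := by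
  rw [gM2, mellin, c2, ← integral_complex_ofReal]
  congr 1
  funext t
  simp only [show (2:ℂ) - 1 = 1 by norm_num, Complex.cpow_one, smul_eq_mul, Complex.real_smul]
  push_cast
  ring

lemma c_var : c2 - c1 ^ 2 = Real.pi ^ 2 / 6 - 1 := by
  have h := g_second
  rw [gM1_eq, gM2_eq] at h
  have h' : 2 * c2 - 2 * c1 ^ 2 = Real.pi ^ 2 / 3 - 2 := by exact_mod_cast h
  linarith

lemma sub_deriv (b τ : ℝ) (x : ℝ) (hx : x ∈ Set.Ioi (0:ℝ)) :
    HasDerivWithinAt (fun x : ℝ => b * x ^ (-τ)) (b * (-τ * x ^ (-τ - 1))) (Set.Ioi 0) x :=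
  ((Real.hasDerivAt_rpow_const (Or.inl (ne_of_gt hx))).const_mul b).hasDerivWithinAt

lemma sub_inj (b τ : ℝ) (hb : 0 < b) (hτ : 0 < τ) :
    Set.InjOn (fun x : ℝ => b * x ^ (-τ)) (Set.Ioi 0) := by
  intro x hx y hy h
  have h' : x ^ (-τ) = y ^ (-τ) := mul_left_cancel₀ hb.ne' h
  exact (Real.rpow_left_inj (le_of_lt hx) (le_of_lt hy) (by linarith)).1 h'

lemma sub_image (b τ : ℝ) (hb : 0 < b) (hτ : 0 < τ) :
    (fun x : ℝ => b * x ^ (-τ)) '' (Set.Ioi 0) = Set.Ioi 0 := by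
  ext y
  constructor
  · rintro ⟨x, hx, rfl⟩
    exact mul_pos hb (Real.rpow_pos_of_pos hx _)
  · intro hy
    have hyb : 0 < y / b := div_pos hy hb
    refine ⟨(y / b) ^ (-τ)⁻¹, Real.rpow_pos_of_pos hyb _, ?_⟩
    simp only
    rw [Real.rpow_inv_rpow hyb.le (by linarith)]
    field_simp

lemma sub_abs (b τ : ℝ) (hb : 0 < b) (hτ : 0 < τ) (x : ℝ) (hx : x ∈ Set.Ioi (0:ℝ)) :
    |b * (-τ * x ^ (-τ - 1))| = b * τ * x ^ (-(τ + 1)) := by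
  have := Real.rpow_pos_of_pos hx (-τ - 1)
  rw [show b * (-τ * x ^ (-τ - 1)) = - (b * τ * x ^ (-τ - 1)) by ring, abs_neg,
    abs_of_pos (by positivity)]
  congr 2; ring

lemma sub_lint (b τ : ℝ) (hb : 0 < b) (hτ : 0 < τ) (g : ℝ → ENNReal) :
    ∫⁻ x in Set.Ioi (0:ℝ), ENNReal.ofReal (b * τ * x ^ (-(τ + 1))) * g (b * x ^ (-τ)) =
      ∫⁻ y in Set.Ioi (0:ℝ), g y := by
  have h := lintegral_image_eq_lintegral_abs_deriv_mul measurableSet_Ioi (sub_deriv b τ)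
    (sub_inj b τ hb hτ) g
  rw [sub_image b τ hb hτ] at h
  rw [h]
  refine setLIntegral_congr_fun measurableSet_Ioi fun x hx => ?_
  rw [sub_abs b τ hb hτ x hx]

lemma sub_bochner (b τ : ℝ) (hb : 0 < b) (hτ : 0 < τ) (g f : ℝ → ℝ)
    (hf : ∀ x, 0 < x → f x = x ^ (-(τ + 1)) * g (b * x ^ (-τ)))
    (hg : IntegrableOn g (Set.Ioi 0)) :
    IntegrableOn f (Set.Ioi 0) ∧
    ∫ x in Set.Ioi (0:ℝ), f x = 1 / (τ * b) * ∫ y in Set.Ioi (0:ℝ), g y := by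
  have e : ∀ x ∈ Set.Ioi (0:ℝ), |b * (-τ * x ^ (-τ - 1))| • g (b * x ^ (-τ)) = (b * τ) * f x := by
    intro x hx
    rw [sub_abs b τ hb hτ x hx, hf x hx, smul_eq_mul]; ring
  have h1 := integrableOn_image_iff_integrableOn_abs_deriv_smul measurableSet_Ioi (sub_deriv b τ)
    (sub_inj b τ hb hτ) g
  have h2 := integral_image_eq_integral_abs_deriv_smul measurableSet_Ioi (sub_deriv b τ)
    (sub_inj b τ hb hτ) g
  rw [sub_image b τ hb hτ] at h1 h2
  rw [integrableOn_congr_fun e measurableSet_Ioi] at h1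
  rw [setIntegral_congr_fun measurableSet_Ioi e, integral_const_mul] at h2
  constructor
  · have := (h1.1 hg).const_mul (b * τ)⁻¹
    refine this.congr (ae_of_all _ fun x => ?_)
    simp only
    field_simp
  · rw [h2]; field_simp

noncomputable def pfun (τ b x : ℝ) : ℝ := x ^ (-(τ + 1)) * Real.exp (-(b / x ^ τ))
noncomputable def qfun (τ b x : ℝ) : ℝ := b / x ^ τ

lemma sub_eq (τ b x : ℝ) (hx : 0 < x) : b / x ^ τ = b * x ^ (-τ) := by
  rw [Real.rpow_neg hx.le]; rfl

lemma sub_log (τ b x : ℝ) (hτ : 0 < τ) (hb : 0 < b) (hx : 0 < x) :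
    Real.log x = (Real.log b - Real.log (b * x ^ (-τ))) / τ := by
  rw [Real.log_mul hb.ne' (Real.rpow_pos_of_pos hx _).ne', Real.log_rpow hx]
  field_simp; ring

lemma e_int0 : IntegrableOn (fun t => Real.exp (-t)) (Set.Ioi (0:ℝ)) := integrableOn_exp_neg_Ioi 0

lemma e_int1 : IntegrableOn (fun t => t * Real.exp (-t)) (Set.Ioi (0:ℝ)) := by
  have := Real.GammaIntegral_convergent (s := 2) (by norm_num)
  refine this.congr_fun (fun x hx => ?_) measurableSet_Ioi
  beta_reduce
  rw [show (2:ℝ) - 1 = 1 by norm_num, Real.rpow_one, mul_comm]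

lemma e_val1 : ∫ t in Set.Ioi (0:ℝ), t * Real.exp (-t) = 1 := by
  have := Real.Gamma_eq_integral (s := 2) (by norm_num)
  rw [Real.Gamma_two] at this
  rw [this]
  refine setIntegral_congr_fun measurableSet_Ioi (fun x hx => ?_)
  rw [show (2:ℝ) - 1 = 1 by norm_num, Real.rpow_one, mul_comm]

lemma mom_p (τ b : ℝ) (hb : 0 < b) (hτ : 0 < τ) : IntegrableOn (pfun τ b) (Set.Ioi 0) ∧
    ∫ x in Set.Ioi (0:ℝ), pfun τ b x = 1 / (τ * b) := by
  have := sub_bochner b τ hb hτ (fun t => Real.exp (-t)) (pfun τ b) ?_ e_int0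
  · rwa [integral_exp_neg_Ioi_zero, mul_one] at this
  · intro x hx
    simp only [pfun, sub_eq τ b x hx]

lemma mom_q (τ b : ℝ) (hb : 0 < b) (hτ : 0 < τ) :
    IntegrableOn (fun x => pfun τ b x * qfun τ b x) (Set.Ioi 0) ∧
    ∫ x in Set.Ioi (0:ℝ), pfun τ b x * qfun τ b x = 1 / (τ * b) * 1 := by
  have := sub_bochner b τ hb hτ (fun t => t * Real.exp (-t)) (fun x => pfun τ b x * qfun τ b x) ?_ e_int1
  · rwa [e_val1] at this
  · intro x hx
    simp only [pfun, qfun, sub_eq τ b x hx]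
    ring

lemma mom_qL (τ b : ℝ) (hb : 0 < b) (hτ : 0 < τ) :
    IntegrableOn (fun x => pfun τ b x * (qfun τ b x * Real.log x)) (Set.Ioi 0) ∧
    ∫ x in Set.Ioi (0:ℝ), pfun τ b x * (qfun τ b x * Real.log x)
      = 1 / (τ * b) * ((Real.log b - c1) / τ) := by
  have hi1 := e_int1.const_mul (Real.log b / τ)
  have hi2 := c_int1.const_mul (1 / τ)
  have := sub_bochner b τ hb hτ (fun t => (Real.log b / τ) * (t * Real.exp (-t)) -
    1 / τ * (t * Real.exp (-t) * Real.log t))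
    (fun x => pfun τ b x * (qfun τ b x * Real.log x)) ?_ (hi1.sub hi2)
  · rw [integral_sub hi1 hi2, integral_const_mul, integral_const_mul, e_val1, ← c1] at this
    refine ⟨this.1, this.2.trans ?_⟩
    ring
  · intro x hx
    simp only [pfun, qfun, sub_eq τ b x hx]
    conv_lhs => rw [sub_log τ b x hτ hb hx]
    ring

lemma mom_qLL (τ b : ℝ) (hb : 0 < b) (hτ : 0 < τ) :
    IntegrableOn (fun x => pfun τ b x * (qfun τ b x * Real.log x ^ 2)) (Set.Ioi 0) ∧
    ∫ x in Set.Ioi (0:ℝ), pfun τ b x * (qfun τ b x * Real.log x ^ 2)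
      = 1 / (τ * b) * ((Real.log b ^ 2 - 2 * Real.log b * c1 + c2) / τ ^ 2) := by
  have hi1 := e_int1.const_mul (Real.log b ^ 2 / τ ^ 2)
  have hi2 := c_int1.const_mul (2 * Real.log b / τ ^ 2)
  have hi3 := c_int2.const_mul (1 / τ ^ 2)
  have h12 : Integrable (fun t => (Real.log b ^ 2 / τ ^ 2) * (t * Real.exp (-t)) -
    2 * Real.log b / τ ^ 2 * (t * Real.exp (-t) * Real.log t))
    (volume.restrict (Set.Ioi (0:ℝ))) := hi1.sub hi2
  have h123 : Integrable (fun t => (Real.log b ^ 2 / τ ^ 2) * (t * Real.exp (-t)) -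
    2 * Real.log b / τ ^ 2 * (t * Real.exp (-t) * Real.log t)
     + 1 / τ ^ 2 * (t * Real.exp (-t) * Real.log t ^ 2))
    (volume.restrict (Set.Ioi (0:ℝ))) := h12.add hi3
  have := sub_bochner b τ hb hτ (fun t => (Real.log b ^ 2 / τ ^ 2) * (t * Real.exp (-t)) -
    2 * Real.log b / τ ^ 2 * (t * Real.exp (-t) * Real.log t)
     + 1 / τ ^ 2 * (t * Real.exp (-t) * Real.log t ^ 2))
    (fun x => pfun τ b x * (qfun τ b x * Real.log x ^ 2)) ?_ h123
  · rw [integral_add h12 hi3, integral_sub hi1 hi2, integral_const_mul,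
      integral_const_mul, integral_const_mul, e_val1, ← c1, ← c2] at this
    refine ⟨this.1, this.2.trans ?_⟩
    ring
  · intro x hx
    simp only [pfun, qfun, sub_eq τ b x hx]
    conv_lhs => rw [sub_log τ b x hτ hb hx]
    ring

lemma pair_int {K : ℕ} (p : Fin K → ℝ → ℝ) (P : Fin K → ℝ) (i k : Fin K) (hik : i ≠ k)
    (A B : ℝ → ℝ) (a b : ℝ)
    (hp : ∀ j, IntegrableOn (p j) (Set.Ioi 0) ∧ ∫ x in Set.Ioi (0:ℝ), p j x = P j)
    (hA : IntegrableOn (fun x => p i x * A x) (Set.Ioi 0) ∧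
      ∫ x in Set.Ioi (0:ℝ), p i x * A x = P i * a)
    (hB : IntegrableOn (fun x => p k x * B x) (Set.Ioi 0) ∧
      ∫ x in Set.Ioi (0:ℝ), p k x * B x = P k * b) :
    Integrable (fun x : Fin K → ℝ => (∏ j, p j (x j)) * (A (x i) * B (x k)))
      (Measure.pi fun _ => volume.restrict (Set.Ioi (0:ℝ))) ∧
    ∫ x : Fin K → ℝ, (∏ j, p j (x j)) * (A (x i) * B (x k))
      ∂(Measure.pi fun _ => volume.restrict (Set.Ioi (0:ℝ))) = (∏ j, P j) * (a * b) := by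
  set f : Fin K → ℝ → ℝ := fun j x => p j x * ((if j = i then A x else 1) * (if j = k then B x else 1))
    with hf
  have e : (fun x : Fin K → ℝ => (∏ j, p j (x j)) * (A (x i) * B (x k))) =
      fun x => ∏ j, f j (x j) := by
    funext x
    simp only [hf, Finset.prod_mul_distrib]
    simp
  have hfj : ∀ j, IntegrableOn (f j) (Set.Ioi 0) ∧ ∫ x in Set.Ioi (0:ℝ), f j x
      = P j * ((if j = i then a else 1) * (if j = k then b else 1)) := by
    intro j
    by_cases h1 : j = i
    · subst h1
      simpa [hf, hik] using hA
    · by_cases h2 : j = k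
      · subst h2
        simpa [hf, h1] using hB
      · simpa [hf, h1, h2] using hp j
  rw [e]
  refine ⟨Integrable.fintype_prod fun j => (hfj j).1, ?_⟩
  rw [integral_fintype_prod_eq_prod]
  simp_rw [fun j => (hfj j).2, Finset.prod_mul_distrib]
  simp

lemma fill_last (n : ℕ) (u : Fin n → ℝ) : fillMap (n + 1) u (Fin.last n) = 1 - ∑ j, u j := by
  simp [fillMap]

lemma fill_castSucc (n : ℕ) (u : Fin n → ℝ) (i : Fin n) :
    fillMap (n + 1) u i.castSucc = u i := by
  simp [fillMap]

lemma fill_sum (n : ℕ) (u : Fin n → ℝ) : ∑ i, fillMap (n + 1) u i = 1 := by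
  rw [Fin.sum_univ_castSucc, fill_last]
  simp_rw [fill_castSucc]
  ring

lemma fill_meas (n : ℕ) : Measurable (fun u : Fin n → ℝ => fillMap (n + 1) u) := by
  rw [measurable_pi_iff]
  intro i
  refine Fin.lastCases ?_ (fun j => ?_) i
  · simp_rw [fill_last]; fun_prop
  · simp_rw [fill_castSucc]; fun_prop

lemma scale_lint (n : ℕ) (s : ℝ) (hs : 0 < s) (H : (Fin n → ℝ) → ENNReal) (hH : Measurable H) :
    ∫⁻ v, H v = ENNReal.ofReal (s ^ n) * ∫⁻ u, H (s • u) := by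
  have h := Measure.map_addHaar_smul (volume : Measure (Fin n → ℝ)) hs.ne'
  have h2 : ∫⁻ u, H (s • u) = ∫⁻ v, H v ∂(Measure.map (fun x : Fin n → ℝ => s • x) volume) := by
    rw [lintegral_map hH (measurable_const_smul s)]
  rw [h2, h, lintegral_smul_measure, smul_eq_mul, ← mul_assoc, ← ENNReal.ofReal_mul (by positivity)]
  have hsn : 0 < s ^ n := by positivity
  rw [Module.finrank_fin_fun, abs_of_pos (by positivity), mul_inv_cancel₀ hsn.ne']
  simp

lemma polar (n : ℕ) (G : (Fin (n + 1) → ℝ) → ENNReal) (hG : Measurable G)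
    (h0 : ∀ x, (¬ ∀ i, 0 < x i) → G x = 0) :
    ∫⁻ x, G x = ∫⁻ u : Fin n → ℝ, ∫⁻ s in Set.Ioi (0:ℝ),
      ENNReal.ofReal (s ^ n) * G (s • fillMap (n + 1) u) := by
  have hvp := (volume_preserving_piFinSuccAbove (fun _ : Fin (n+1) => ℝ) (Fin.last n)).symm
  rw [← hvp.lintegral_comp hG]
  have hsw : ∀ F : ℝ × (Fin n → ℝ) → ENNReal, Measurable F →
      ∫⁻ z, F z = ∫⁻ v, ∫⁻ t, F (t, v) := by
    intro F hF
    rw [Measure.volume_eq_prod, lintegral_prod_symm _ hF.aemeasurable]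
  have hm := hG.comp (MeasurableEquiv.piFinSuccAbove (fun _ : Fin (n+1) => ℝ) (Fin.last n)).symm.measurable
  refine (hsw _ hm).trans ?_
  simp only [Function.comp_def]
  set E := (MeasurableEquiv.piFinSuccAbove (fun _ : Fin (n+1) => ℝ) (Fin.last n)).symm with hE
  have e1 : ∀ v : Fin n → ℝ, ∫⁻ t, G (E (t, v)) = ∫⁻ s, G (E (s - ∑ j, v j, v)) := by
    intro v
    exact (lintegral_sub_right_eq_self (fun t => G (E (t, v))) (∑ j, v j)).symm
  simp_rw [e1]
  have hm2 : Measurable (fun z : (Fin n → ℝ) × ℝ => G (E (z.2 - ∑ j, z.1 j, z.1))) := by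
    refine hm.comp ?_
    fun_prop
  rw [lintegral_lintegral_swap hm2.aemeasurable]
  have hEl : ∀ t (v : Fin n → ℝ), E (t, v) (Fin.last n) = t := by
    intro t v
    simp [hE, MeasurableEquiv.piFinSuccAbove]
  have hEc : ∀ t (v : Fin n → ℝ) i, E (t, v) (Fin.castSucc i) = v i := by
    intro t v i
    simp [hE, MeasurableEquiv.piFinSuccAbove]
  have e2 : ∀ s : ℝ, s ∉ Set.Ioi (0:ℝ) → ∫⁻ v, G (E (s - ∑ j, v j, v)) = 0 := by
    intro s hs
    rw [lintegral_eq_zero_iff' (by fun_prop)]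
    refine ae_of_all _ fun v => h0 _ fun hpos => hs ?_
    have : 0 < ∑ i, E (s - ∑ j, v j, v) i :=
      Finset.sum_pos (fun i _ => hpos i) Finset.univ_nonempty
    rw [Fin.sum_univ_castSucc, hEl] at this
    simp_rw [hEc] at this
    simpa using this
  rw [← setLIntegral_eq_of_support_subset (s := Set.Ioi (0:ℝ))]
  · have e3 : ∀ s ∈ Set.Ioi (0:ℝ), ∫⁻ v, G (E (s - ∑ j, v j, v)) =
        ∫⁻ u : Fin n → ℝ, ENNReal.ofReal (s ^ n) * G (s • fillMap (n + 1) u) := by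
      intro s hs
      rw [scale_lint n s hs _ (by fun_prop), lintegral_const_mul' _ _ ENNReal.ofReal_ne_top]
      congr 2
      funext u
      congr 1
      funext i
      refine Fin.lastCases ?_ (fun j => ?_) i
      · rw [hEl]
        simp only [Pi.smul_apply, smul_eq_mul, fill_last, ← Finset.mul_sum]
        ring
      · rw [hEc]
        simp only [Pi.smul_apply, fill_castSucc]
    rw [setLIntegral_congr_fun measurableSet_Ioi e3, lintegral_lintegral_swap]
    have hfm := fill_meas n
    refine Measurable.aemeasurable ?_
    refine Measurable.mul (by fun_prop) (hG.comp ?_)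
    exact measurable_fst.smul (hfm.comp measurable_snd)
  · intro s hs
    by_contra h
    exact hs (e2 s h)

noncomputable def Dfun (K : ℕ) (β : Fin K → ℝ) (τ : ℝ) (x : Fin K → ℝ) : ℝ :=
  (∑ l, qfun τ (β l) (x l)) * (∑ l, qfun τ (β l) (x l) * Real.log (x l) ^ 2) -
    (∑ l, qfun τ (β l) (x l) * Real.log (x l)) ^ 2

noncomputable def Gr (K : ℕ) (β : Fin K → ℝ) (τ : ℝ) (x : Fin K → ℝ) : ℝ :=
  (∏ j, pfun τ (β j) (x j)) * Dfun K β τ x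

noncomputable def Ffun (K : ℕ) (β : Fin K → ℝ) (τ : ℝ) (x : Fin K → ℝ) : ℝ :=
  hfun K β τ x *
          ((∑ l, (β l / x l ^ τ) * Real.log (x l) ^ 2) / kfun K β τ x
            - (∑ l, (β l / x l ^ τ) * Real.log (x l)) ^ 2 / kfun K β τ x ^ 2)

lemma V_alg (K : ℕ) (a : Fin K → ℝ) (τ : ℝ) (hτ : 0 < τ) :
    ∑ i, ∑ k, (if i = k then 0 else
      1 * ((a k ^ 2 - 2 * a k * c1 + c2) / τ ^ 2) - ((a i - c1) / τ) * ((a k - c1) / τ))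
    = ((K : ℝ) * ((K : ℝ) - 1) * (Real.pi ^ 2 / 6 - 1)
            + (1 / 2) * ∑ i, ∑ k, (a i - a k) ^ 2) / τ ^ 2 := by
  rw [← c_var]
  have e : ∀ i k : Fin K, (if i = k then 0 else
      1 * ((a k ^ 2 - 2 * a k * c1 + c2) / τ ^ 2) - ((a i - c1) / τ) * ((a k - c1) / τ)) =
      (a k ^ 2 - a i * a k + c1 * a i - c1 * a k + (c2 - c1 ^ 2)
        - (if i = k then (c2 - c1 ^ 2) else 0)) / τ ^ 2 := by
    intro i k
    split_ifs with h
    · subst h; ring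
    · field_simp; ring
  have e2 : ∀ i k : Fin K, (a i - a k) ^ 2 = a i ^ 2 - 2 * (a i * a k) + a k ^ 2 := by
    intro i k; ring
  simp_rw [e, ← Finset.sum_div]
  congr 1
  simp only [e2, Finset.sum_sub_distrib, Finset.sum_add_distrib, Finset.sum_const, Finset.card_univ,
    Fintype.card_fin, nsmul_eq_mul, ← Finset.mul_sum, ← Finset.sum_mul, Finset.sum_ite_eq,
    Finset.mem_univ, if_true]
  ring

lemma D_double (K : ℕ) (β : Fin K → ℝ) (τ : ℝ) (x : Fin K → ℝ) :
    Dfun K β τ x = ∑ i, ∑ k, (qfun τ (β i) (x i) * (qfun τ (β k) (x k) * Real.log (x k) ^ 2) -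
      (qfun τ (β i) (x i) * Real.log (x i)) * (qfun τ (β k) (x k) * Real.log (x k))) := by
  simp only [Dfun, sq, Finset.sum_mul_sum, Finset.sum_sub_distrib]

lemma Gr_int (K : ℕ) (β : Fin K → ℝ) (τ : ℝ) (hτ : 0 < τ) (hβ : ∀ i, 0 < β i) :
    Integrable (Gr K β τ) (Measure.pi fun _ => volume.restrict (Set.Ioi (0:ℝ))) ∧
    ∫ x, Gr K β τ x ∂(Measure.pi fun _ => volume.restrict (Set.Ioi (0:ℝ))) =
      (∏ j, 1 / (τ * β j)) * (((K : ℝ) * ((K : ℝ) - 1) * (Real.pi ^ 2 / 6 - 1)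
            + (1 / 2) * ∑ i, ∑ k, (Real.log (β i) - Real.log (β k)) ^ 2) / τ ^ 2) := by
  set T : Fin K → Fin K → (Fin K → ℝ) → ℝ := fun i k x => (∏ j, pfun τ (β j) (x j)) *
    (qfun τ (β i) (x i) * (qfun τ (β k) (x k) * Real.log (x k) ^ 2) -
      (qfun τ (β i) (x i) * Real.log (x i)) * (qfun τ (β k) (x k) * Real.log (x k))) with hT
  have hG : Gr K β τ = fun x => ∑ i, ∑ k, T i k x := by
    funext x
    simp only [Gr, D_double, Finset.mul_sum, hT]
  have hTi : ∀ i k, Integrable (T i k) (Measure.pi fun _ => volume.restrict (Set.Ioi (0:ℝ))) ∧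
      ∫ x, T i k x ∂(Measure.pi fun _ => volume.restrict (Set.Ioi (0:ℝ))) =
      (∏ j, 1 / (τ * β j)) * (if i = k then 0 else
      1 * ((Real.log (β k) ^ 2 - 2 * Real.log (β k) * c1 + c2) / τ ^ 2) -
        ((Real.log (β i) - c1) / τ) * ((Real.log (β k) - c1) / τ)) := by
    intro i k
    by_cases h : i = k
    · subst h
      have : T i i = fun _ => 0 := by
        funext x; simp only [hT]; ring
      rw [this]
      simp
    · have A1 := pair_int (fun j => pfun τ (β j)) (fun j => 1 / (τ * β j)) i k h _ _ _ _
        (fun j => mom_p τ (β j) (hβ j) hτ) (mom_q τ (β i) (hβ i) hτ) (mom_qLL τ (β k) (hβ k) hτ)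
      have A2 := pair_int (fun j => pfun τ (β j)) (fun j => 1 / (τ * β j)) i k h _ _ _ _
        (fun j => mom_p τ (β j) (hβ j) hτ) (mom_qL τ (β i) (hβ i) hτ) (mom_qL τ (β k) (hβ k) hτ)
      have e : T i k = fun x => (∏ j, pfun τ (β j) (x j)) *
        (qfun τ (β i) (x i) * (qfun τ (β k) (x k) * Real.log (x k) ^ 2)) -
        (∏ j, pfun τ (β j) (x j)) *
        ((qfun τ (β i) (x i) * Real.log (x i)) * (qfun τ (β k) (x k) * Real.log (x k))) := by
        funext x; simp only [hT]; ring
      rw [e]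
      refine ⟨A1.1.sub A2.1, ?_⟩
      rw [integral_sub A1.1 A2.1, A1.2, A2.2, if_neg h]
      ring
  rw [hG]
  refine ⟨integrable_finsetSum _ fun i _ => integrable_finsetSum _ fun k _ => (hTi i k).1, ?_⟩
  rw [integral_finsetSum _ fun i _ => integrable_finsetSum _ fun k _ => (hTi i k).1]
  simp_rw [fun i => integral_finsetSum (μ := Measure.pi fun _ : Fin K => volume.restrict (Set.Ioi (0:ℝ)))
    Finset.univ (f := T i) fun k _ => (hTi i k).1, fun i k => (hTi i k).2, ← Finset.mul_sum]
  rw [V_alg K (fun i => Real.log (β i)) τ hτ]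

lemma D_nonneg (K : ℕ) (β : Fin K → ℝ) (τ : ℝ) (hβ : ∀ i, 0 < β i)
    (x : Fin K → ℝ) (hx : ∀ i, 0 < x i) : 0 ≤ Dfun K β τ x := by
  have hq : ∀ l, 0 ≤ qfun τ (β l) (x l) := fun l =>
    (div_pos (hβ l) (Real.rpow_pos_of_pos (hx l) _)).le
  rw [Dfun, sub_nonneg]
  refine Finset.sum_sq_le_sum_mul_sum_of_sq_le_mul _ (fun i _ => hq i)
    (fun i _ => mul_nonneg (hq i) (sq_nonneg _)) (fun i _ => le_of_eq (by ring))

lemma k_pos (n : ℕ) (β : Fin (n+1) → ℝ) (τ : ℝ) (hβ : ∀ i, 0 < β i)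
    (x : Fin (n+1) → ℝ) (hx : ∀ i, 0 < x i) : 0 < kfun (n+1) β τ x :=
  Finset.sum_pos (fun i _ => div_pos (hβ i) (Real.rpow_pos_of_pos (hx i) _)) Finset.univ_nonempty

lemma F_eq (n : ℕ) (β : Fin (n+1) → ℝ) (τ : ℝ) (hβ : ∀ i, 0 < β i)
    (x : Fin (n+1) → ℝ) (hx : ∀ i, 0 < x i) :
    Ffun (n+1) β τ x * kfun (n+1) β τ x ^ (n + 3) = (∏ i, x i ^ (-(τ + 1))) * Dfun (n+1) β τ x := by
  have hk := k_pos n β τ hβ x hx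
  have hD : Dfun (n+1) β τ x = kfun (n+1) β τ x * (∑ l, (β l / x l ^ τ) * Real.log (x l) ^ 2)
    - (∑ l, (β l / x l ^ τ) * Real.log (x l)) ^ 2 := rfl
  have hh : hfun (n+1) β τ x = (kfun (n+1) β τ x ^ (n+1))⁻¹ * ∏ i, x i ^ (-(τ + 1)) := by
    have : hfun (n+1) β τ x = kfun (n+1) β τ x ^ (-((n+1 : ℕ) : ℝ)) * ∏ i, x i ^ (-(τ + 1)) := rfl
    rw [this, Real.rpow_neg hk.le, Real.rpow_natCast]
  rw [Ffun, hh, hD]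
  field_simp
  ring

lemma F_nonneg_pos (n : ℕ) (β : Fin (n+1) → ℝ) (τ : ℝ) (hβ : ∀ i, 0 < β i)
    (x : Fin (n+1) → ℝ) (hx : ∀ i, 0 < x i) : 0 ≤ Ffun (n+1) β τ x := by
  have hk := k_pos n β τ hβ x hx
  have h := F_eq n β τ hβ x hx
  have h2 : 0 ≤ Ffun (n+1) β τ x * kfun (n+1) β τ x ^ (n + 3) := by
    rw [h]
    exact mul_nonneg (Finset.prod_nonneg fun i _ => (Real.rpow_pos_of_pos (hx i) _).le)
      (D_nonneg _ β τ hβ x hx)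
  exact nonneg_of_mul_nonneg_left h2 (by positivity)

lemma F_zero (K : ℕ) (β : Fin K → ℝ) (τ : ℝ) (hτ : 0 < τ) (x : Fin K → ℝ) (i : Fin K)
    (hx : x i = 0) : Ffun K β τ x = 0 := by
  have : ∏ i, x i ^ (-(τ + 1)) = 0 :=
    Finset.prod_eq_zero (Finset.mem_univ i) (by rw [hx, Real.zero_rpow (by linarith)])
  rw [Ffun, hfun, this]; ring

lemma Gr_scale (n : ℕ) (β : Fin (n+1) → ℝ) (τ : ℝ) (hτ : 0 < τ) (hβ : ∀ i, 0 < β i)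
    (x : Fin (n+1) → ℝ) (hx : ∀ i, 0 < x i) (s : ℝ) (hs : 0 < s) :
    s ^ n * Gr (n+1) β τ (s • x) = (Ffun (n+1) β τ x / τ) *
      ((kfun (n+1) β τ x * τ * s ^ (-(τ + 1))) *
        (Real.exp (-(kfun (n+1) β τ x * s ^ (-τ))) * (kfun (n+1) β τ x * s ^ (-τ)) ^ (n+2))) := by
  have hF := F_eq n β τ hβ x hx
  have hc : s ^ (-(τ + 1)) = s ^ (-τ) * s⁻¹ := by
    rw [show -(τ + 1) = -τ + (-1) by ring, Real.rpow_add hs, Real.rpow_neg_one]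
  set c := s ^ (-τ) with hcdef
  have hq : ∀ j, qfun τ (β j) ((s • x) j) = c * qfun τ (β j) (x j) := by
    intro j
    simp only [qfun, Pi.smul_apply, smul_eq_mul]
    rw [Real.mul_rpow hs.le (hx j).le, hcdef, Real.rpow_neg hs.le]
    have := Real.rpow_pos_of_pos hs τ
    have := Real.rpow_pos_of_pos (hx j) τ
    field_simp
  have hlog : ∀ j, Real.log ((s • x) j) = Real.log s + Real.log (x j) := by
    intro j
    simp only [Pi.smul_apply, smul_eq_mul]
    rw [Real.log_mul hs.ne' (hx j).ne']
  have hD : Dfun (n+1) β τ (s • x) = c ^ 2 * Dfun (n+1) β τ x := by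
    have r1 : ∀ l, c * qfun τ (β l) (x l) * (Real.log s + Real.log (x l)) ^ 2 =
      c * Real.log s ^ 2 * qfun τ (β l) (x l) + 2 * c * Real.log s * (qfun τ (β l) (x l) * Real.log (x l))
      + c * (qfun τ (β l) (x l) * Real.log (x l) ^ 2) := fun l => by ring
    have r2 : ∀ l, c * qfun τ (β l) (x l) * (Real.log s + Real.log (x l)) =
      c * Real.log s * qfun τ (β l) (x l) + c * (qfun τ (β l) (x l) * Real.log (x l)) := fun l => by ring
    simp only [Dfun, hq, hlog, r1, r2, Finset.sum_add_distrib, ← Finset.mul_sum]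
    ring
  have hP : ∏ j, pfun τ (β j) ((s • x) j) = (c * s⁻¹) ^ (n+1) * (∏ j, x j ^ (-(τ + 1))) *
      Real.exp (-(kfun (n+1) β τ x * c)) := by
    have : ∀ j, pfun τ (β j) ((s • x) j) = (c * s⁻¹) * x j ^ (-(τ+1)) *
        Real.exp (-(c * qfun τ (β j) (x j))) := by
      intro j
      rw [← hq j, ← hc, ← Real.mul_rpow hs.le (hx j).le]
      rfl
    simp only [this, Finset.prod_mul_distrib, Finset.prod_const, Finset.card_univ, Fintype.card_fin,
      ← Real.exp_sum]
    have e3 : ∑ j, -(c * qfun τ (β j) (x j)) = -(kfun (n+1) β τ x * c) := by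
      rw [Finset.sum_neg_distrib, ← Finset.mul_sum, mul_comm]
      rfl
    rw [e3]
    ring
  rw [Gr, hP, hD, hc]
  have e : (∏ j, x j ^ (-(τ + 1))) * Dfun (n+1) β τ x = Ffun (n+1) β τ x * kfun (n+1) β τ x ^ (n + 3) := hF.symm
  calc _ = s ^ n * (c * s⁻¹) ^ (n+1) * Real.exp (-(kfun (n+1) β τ x * c)) * c ^ 2 *
        ((∏ j, x j ^ (-(τ + 1))) * Dfun (n+1) β τ x) := by ring
    _ = _ := by
      rw [e]
      rw [mul_pow c s⁻¹, inv_pow]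
      field_simp
      ring

lemma gamma_lint (n : ℕ) : ∫⁻ y in Set.Ioi (0:ℝ), ENNReal.ofReal (Real.exp (-y) * y ^ (n+2)) =
    ENNReal.ofReal ((n+2).factorial : ℝ) := by
  have h1 := Real.GammaIntegral_convergent (s := ((n+2 : ℕ) : ℝ) + 1) (by positivity)
  have h2 := Real.Gamma_eq_integral (s := ((n+2 : ℕ) : ℝ) + 1) (by positivity)
  rw [Real.Gamma_nat_eq_factorial] at h2
  have e : ∀ y : ℝ, Real.exp (-y) * y ^ (((n+2 : ℕ) : ℝ) + 1 - 1) = Real.exp (-y) * y ^ (n+2) := by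
    intro y; rw [add_sub_cancel_right, Real.rpow_natCast]
  simp_rw [e] at h1 h2
  rw [h2, ofReal_integral_eq_lintegral_ofReal h1]
  refine (ae_restrict_iff' measurableSet_Ioi).2 (ae_of_all _ fun y hy => ?_)
  have : (0:ℝ) < y := hy
  simp only [Pi.zero_apply]
  positivity

lemma radial (n : ℕ) (β : Fin (n+1) → ℝ) (τ : ℝ) (hτ : 0 < τ) (hβ : ∀ i, 0 < β i)
    (x : Fin (n+1) → ℝ) (hx : ∀ i, 0 < x i) :
    ∫⁻ s in Set.Ioi (0:ℝ), ENNReal.ofReal (s ^ n) * ENNReal.ofReal (Gr (n+1) β τ (s • x)) =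
      ENNReal.ofReal ((n+2).factorial / τ) * ENNReal.ofReal (Ffun (n+1) β τ x) := by
  have hk := k_pos n β τ hβ x hx
  have hF := F_nonneg_pos n β τ hβ x hx
  have e : ∀ s ∈ Set.Ioi (0:ℝ), ENNReal.ofReal (s ^ n) * ENNReal.ofReal (Gr (n+1) β τ (s • x)) =
      ENNReal.ofReal (Ffun (n+1) β τ x / τ) *
      (ENNReal.ofReal (kfun (n+1) β τ x * τ * s ^ (-(τ + 1))) *
        (fun y => ENNReal.ofReal (Real.exp (-y) * y ^ (n+2))) (kfun (n+1) β τ x * s ^ (-τ))) := by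
    intro s hs
    have hs' : 0 < s := hs
    have := Real.rpow_pos_of_pos hs' (-(τ+1))
    simp only
    rw [← ENNReal.ofReal_mul (by positivity), Gr_scale n β τ hτ hβ x hx s hs,
      ENNReal.ofReal_mul (by positivity), ENNReal.ofReal_mul (by positivity)]
  rw [setLIntegral_congr_fun measurableSet_Ioi e, lintegral_const_mul' _ _ ENNReal.ofReal_ne_top,
    sub_lint _ _ hk hτ (fun y => ENNReal.ofReal (Real.exp (-y) * y ^ (n+2))), gamma_lint, ← ENNReal.ofReal_mul (by positivity),
    ← ENNReal.ofReal_mul (by positivity)]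
  congr 1
  ring

lemma Gr_meas (K : ℕ) (β : Fin K → ℝ) (τ : ℝ) : Measurable (Gr K β τ) := by
  unfold Gr Dfun pfun qfun
  fun_prop

lemma F_meas (K : ℕ) (β : Fin K → ℝ) (τ : ℝ) : Measurable (Ffun K β τ) := by
  unfold Ffun hfun kfun
  fun_prop

lemma main_lint (n : ℕ) (β : Fin (n+1) → ℝ) (τ : ℝ) (hτ : 0 < τ) (hβ : ∀ i, 0 < β i) :
    ENNReal.ofReal (∫ x, Gr (n+1) β τ x ∂(Measure.pi fun _ => volume.restrict (Set.Ioi (0:ℝ)))) =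
    ENNReal.ofReal ((n+2).factorial / τ) *
      ∫⁻ u in {u : Fin n → ℝ | (∀ j, 0 ≤ u j) ∧ ∑ j, u j ≤ 1},
        ENNReal.ofReal (Ffun (n+1) β τ (fillMap (n+1) u)) := by
  set O : Set (Fin (n+1) → ℝ) := Set.univ.pi fun _ => Set.Ioi (0:ℝ) with hO
  have hOm : MeasurableSet O := MeasurableSet.univ_pi fun _ => measurableSet_Ioi
  have memO : ∀ x, x ∈ O ↔ ∀ i, 0 < x i := by intro x; simp [hO]
  have hr : (Measure.pi fun _ : Fin (n+1) => (volume : Measure ℝ).restrict (Set.Ioi (0:ℝ))) =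
      (volume : Measure (Fin (n+1) → ℝ)).restrict O := by
    rw [hO, volume_pi, Measure.restrict_pi_pi]
  set S : Set (Fin n → ℝ) := {u : Fin n → ℝ | (∀ j, 0 ≤ u j) ∧ ∑ j, u j ≤ 1} with hS
  have hSm : MeasurableSet S := by
    have : IsClosed S := by
      rw [hS]
      have : {u : Fin n → ℝ | (∀ j, 0 ≤ u j) ∧ ∑ j, u j ≤ 1} =
        (⋂ j, {u : Fin n → ℝ | 0 ≤ u j}) ∩ {u | ∑ j, u j ≤ 1} := by ext; simp
      rw [this]
      refine IsClosed.inter (isClosed_iInter fun j => ?_) ?_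
      · exact isClosed_le continuous_const (continuous_apply j)
      · exact isClosed_le (by fun_prop) continuous_const
    exact this.measurableSet
  rw [ofReal_integral_eq_lintegral_ofReal (Gr_int (n+1) β τ hτ hβ).1, hr, ← lintegral_indicator hOm,
    polar]
  · rw [← lintegral_indicator hSm, ← lintegral_const_mul' _ _ ENNReal.ofReal_ne_top]
    congr 1
    funext u
    by_cases hpos : ∀ i, 0 < fillMap (n+1) u i
    · have hu : u ∈ S := by
        refine ⟨fun j => ?_, ?_⟩
        · have := hpos j.castSucc
          rw [fill_castSucc] at this; exact this.le
        · have := hpos (Fin.last n)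
          rw [fill_last] at this; linarith
      rw [Set.indicator_of_mem hu, ← radial n β τ hτ hβ _ hpos]
      refine setLIntegral_congr_fun measurableSet_Ioi fun s hs => ?_
      have : s • fillMap (n+1) u ∈ O := by
        rw [memO]; intro i; exact mul_pos hs (hpos i)
      simp only [Set.indicator_of_mem this]
    · have hR : S.indicator (fun u => ENNReal.ofReal (Ffun (n+1) β τ (fillMap (n+1) u))) u = 0 := by
        by_cases hu : u ∈ S
        · rw [Set.indicator_of_mem hu]
          push Not at hpos
          obtain ⟨i, hi⟩ := hpos
          have h0 : 0 ≤ fillMap (n+1) u i := by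
            refine Fin.lastCases ?_ (fun j => ?_) i
            · rw [fill_last]; linarith [hu.2]
            · rw [fill_castSucc]; exact hu.1 j
          rw [F_zero (n+1) β τ hτ _ i (le_antisymm hi h0)]
          simp
        · rw [Set.indicator_of_notMem hu]
      rw [hR, mul_zero]
      rw [setLIntegral_congr_fun (g := fun _ => 0) measurableSet_Ioi]
      · simp
      · intro s hs
        have : s • fillMap (n+1) u ∉ O := by
          rw [memO]; intro h
          refine hpos fun i => ?_
          exact (mul_pos_iff_of_pos_left hs).1 (h i)
        simp only [Set.indicator_of_notMem this, mul_zero]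
  · exact (Gr_meas _ β τ).ennreal_ofReal.indicator hOm
  · intro x hx
    exact Set.indicator_of_notMem (fun h => hx ((memO x).1 h)) _
  · rw [hr]
    refine (ae_restrict_iff' hOm).2 (ae_of_all _ fun x hx => ?_)
    have hx' := (memO x).1 hx
    refine mul_nonneg (Finset.prod_nonneg fun j _ => ?_) (D_nonneg _ β τ hβ x hx')
    exact mul_nonneg (Real.rpow_pos_of_pos (hx' j) _).le (Real.exp_pos _).le

lemma F_nonneg_S (n : ℕ) (β : Fin (n+1) → ℝ) (τ : ℝ) (hτ : 0 < τ) (hβ : ∀ i, 0 < β i)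
    (x : Fin (n+1) → ℝ) (hx : ∀ i, 0 ≤ x i) : 0 ≤ Ffun (n+1) β τ x := by
  by_cases h : ∀ i, 0 < x i
  · exact F_nonneg_pos n β τ hβ x h
  · push Not at h
    obtain ⟨i, hi⟩ := h
    rw [F_zero (n+1) β τ hτ x i (le_antisymm hi (hx i))]

lemma main_succ (n : ℕ) (β : Fin (n+1) → ℝ) (τ : ℝ) (hτ : 0 < τ) (hβ : ∀ i, 0 < β i) :
    ((n+2).factorial / τ) * ∫ x, Ffun (n+1) β τ x ∂(simplexMeasure (n+1)) =
      ∫ x, Gr (n+1) β τ x ∂(Measure.pi fun _ => volume.restrict (Set.Ioi (0:ℝ))) := by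
  have hG0 : 0 ≤ ∫ x, Gr (n+1) β τ x ∂(Measure.pi fun _ => volume.restrict (Set.Ioi (0:ℝ))) := by
    rw [(Gr_int (n+1) β τ hτ hβ).2, ← c_var]
    have hs : c2 - c1 ^ 2 = Real.pi ^ 2 / 6 - 1 := c_var
    have hpi : 0 ≤ c2 - c1 ^ 2 := by rw [hs]; nlinarith [Real.pi_gt_three]
    have h1 : (0:ℝ) ≤ ((n+1 : ℕ) : ℝ) - 1 := by push_cast; simp
    have h2 : (0:ℝ) ≤ ∏ j, 1 / (τ * β j) :=
      Finset.prod_nonneg fun j _ => by have := hβ j; positivity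
    positivity
  have hm := main_lint n β τ hτ hβ
  have hI : ∫ x, Ffun (n+1) β τ x ∂(simplexMeasure (n+1)) =
      (∫⁻ u in {u : Fin n → ℝ | (∀ j, 0 ≤ u j) ∧ ∑ j, u j ≤ 1},
        ENNReal.ofReal (Ffun (n+1) β τ (fillMap (n+1) u))).toReal := by
    rw [simplexMeasure]
    have hfm : Measurable (fillMap (n+1)) := fill_meas n
    rw [integral_map hfm.aemeasurable (F_meas _ β τ).aestronglyMeasurable]
    refine integral_eq_lintegral_of_nonneg_ae ?_ ((F_meas _ β τ).comp hfm).aestronglyMeasurable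
    refine ae_restrict_of_forall_mem ?_ fun (u : Fin n → ℝ) hu => ?_
    · refine MeasurableSet.inter (s₁ := {u : Fin n → ℝ | ∀ j, 0 ≤ u j})
        (s₂ := {u : Fin n → ℝ | ∑ j, u j ≤ 1}) ?_ ?_
      · rw [Set.setOf_forall]
        exact MeasurableSet.iInter fun j =>
          measurableSet_le measurable_const (measurable_pi_apply j)
      · exact measurableSet_le (by fun_prop) measurable_const
    · refine F_nonneg_S n β τ hτ hβ _ fun i => ?_
      refine Fin.lastCases ?_ (fun j => ?_) i
      · rw [fill_last]; exact sub_nonneg.2 hu.2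
      · rw [fill_castSucc]; exact hu.1 j
  rw [hI]
  have := congrArg ENNReal.toReal hm
  rw [ENNReal.toReal_ofReal hG0, ENNReal.toReal_mul, ENNReal.toReal_ofReal (by positivity)] at this
  exact this.symm

/-- The τ–τ component of the Fisher information of the Concrete distribution. -/
theorem concrete_fisher_tau_tau
    (K : ℕ) (hK : 2 ≤ K) (τ : ℝ) (hτ : 0 < τ)
    (β : Fin K → ℝ) (hβ : ∀ i, 0 < β i) :
    ∫ x, hfun K β τ x *
          ((∑ l, (β l / x l ^ τ) * Real.log (x l) ^ 2) / kfun K β τ x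
            - (∑ l, (β l / x l ^ τ) * Real.log (x l)) ^ 2 / kfun K β τ x ^ 2)
        ∂(simplexMeasure K)
      = J0 K β τ *
          ((K : ℝ) * ((K : ℝ) - 1) * (Real.pi ^ 2 / 6 - 1)
            + (1 / 2) * ∑ i, ∑ k, (Real.log (β i) - Real.log (β k)) ^ 2) /
          ((K : ℝ) * ((K : ℝ) + 1) * τ ^ 2) := by
  obtain ⟨n, rfl⟩ : ∃ n, K = n + 1 := ⟨K - 1, by omega⟩
  have h := main_succ n β τ hτ hβ
  rw [(Gr_int (n+1) β τ hτ hβ).2] at h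
  change ∫ x, Ffun (n+1) β τ x ∂(simplexMeasure (n+1)) = _
  set I := ∫ x, Ffun (n+1) β τ x ∂(simplexMeasure (n+1))
  set W := (((n+1 : ℕ) : ℝ) * (((n+1 : ℕ) : ℝ) - 1) * (Real.pi ^ 2 / 6 - 1)
            + (1 / 2) * ∑ i, ∑ k, (Real.log (β i) - Real.log (β k)) ^ 2)
  have hB : (0:ℝ) < ∏ i, β i := Finset.prod_pos fun i _ => hβ i
  have hP : ∏ j, 1 / (τ * β j) = 1 / (τ ^ (n+1) * ∏ i, β i) := by
    rw [Finset.prod_div_distrib, Finset.prod_mul_distrib]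
    simp
  have hfac : ((n+2).factorial : ℝ) = ((n:ℝ) + 2) * (((n:ℝ) + 1) * n.factorial) := by
    rw [Nat.factorial_succ, Nat.factorial_succ]; push_cast; ring
  have hf0 : (0:ℝ) < n.factorial := by exact_mod_cast Nat.factorial_pos n
  rw [hP, hfac] at h
  have hI : I = τ / (((n:ℝ) + 2) * (((n:ℝ) + 1) * n.factorial)) * (1 / (τ ^ (n+1) * ∏ i, β i) * (W / τ ^ 2)) := by
    rw [← h]; field_simp
  rw [hI, J0, Nat.add_sub_cancel]
  push_cast
  rw [show (n:ℝ) + 1 + 1 = n + 2 by ring]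
  field_simp
  ring
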